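/- Let G be a group and k ≥ 3, and set 𝒢_k = {(g₁, …, g_k) ∈ G^k : g₁·g₂⋯g_k = 1}. Suppose Ψ: 𝒢_k → 𝒢_k satisfies Ψ(1, …, 1) = (1, …, 1) and the componentwise-dependence property: whenever (g₁, …, g_k), (h₁, …, h_k) ∈ 𝒢_k and g_l = h_m for some indices l, m, then the l-th component of Ψ(g₁, …, g_k) equals the m-th component of Ψ(h₁, …, h_k). Then there exists a unique group homomorphism f: G → G such that Ψ(g₁, …, g_k) = (f(g₁), …, f(g_k)) for all (g₁, …, g_k) ∈ 𝒢_k. -/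

import Mathlib

/-!
Componentwise dependence says that `(g, i) ↦ Ψ(g)ᵢ` factors through `(g, i) ↦ gᵢ`, so `Ψ` applies a
single function `f` to every component. Evaluating `Ψ` on the triangles `(a, b, (ab)⁻¹, 1, …, 1)`
gives `f(a) f(b) f((ab)⁻¹) = 1`. With `b = 1` this makes `f(a⁻¹)` inverse to `f(a)`, and then the
general case says that `f` is multiplicative.
-/

/-- The `k`-gons in a monoid `M`: the `k`-tuples with ordered product `1`, written `𝒢_k` in the
informal statement. Components are indexed from `0`. -/
abbrev Gon (k : ℕ) (M : Type*) [Monoid M] : Type _ :=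
  {g : Fin k → M // (List.ofFn g).prod = 1}

namespace Gon

section Monoid

variable {M N : Type*} [Monoid M] [Monoid N] {k : ℕ}

theorem exists_eq_comp_of_componentwise {Ψ : Gon k M → Gon k N}
    (hdep : ∀ (g h : Gon k M) (l m : Fin k), g.1 l = h.1 m → (Ψ g).1 l = (Ψ h).1 m) :
    ∃ f : M → N, ∀ g, (Ψ g).1 = f ∘ g.1 := by
  have hfactors : Function.FactorsThrough (fun p : Gon k M × Fin k => (Ψ p.1).1 p.2)
      (fun p => p.1.1 p.2) :=
    fun p q hpq => hdep p.1 q.1 p.2 q.2 hpq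
  obtain ⟨f, hf⟩ := (Function.factorsThrough_iff _).mp hfactors
  exact ⟨f, fun g => funext fun i => congrFun hf (g, i)⟩

end Monoid

section Group

variable {G : Type*} [Group G] {n : ℕ}

/-- The triangle with sides `a`, `b` and `(a * b)⁻¹`, padded with `1` to an `(n + 3)`-gon. It
encodes the multiplication of `G` in its gons. -/
def triangle (n : ℕ) (a b : G) : Gon (n + 3) G :=
  ⟨Fin.cons a (Fin.cons b (Fin.cons (a * b)⁻¹ fun _ => 1)), by simp [List.ofFn_succ]⟩

theorem comp_left_injective {α : Type*} :
    Function.Injective fun (f : G → α) (g : Gon (n + 3) G) => f ∘ g.1 :=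
  fun _ _ h => funext fun a => congrFun (congrFun h (triangle n a 1)) 0

variable {M : Type*} [Monoid M]

theorem prod_ofFn_comp_triangle {f : G → M} (map_one : f 1 = 1) (n : ℕ) (a b : G) :
    (List.ofFn (f ∘ (triangle n a b).1)).prod = f a * f b * f (a * b)⁻¹ := by
  simp [triangle, List.ofFn_succ, map_one, mul_assoc]

theorem map_mul_of_prod_ofFn_comp_eq_one {f : G → M} (map_one : f 1 = 1)
    (hprod : ∀ g : Gon (n + 3) G, (List.ofFn (f ∘ g.1)).prod = 1) (a b : G) :
    f (a * b) = f a * f b := by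
  have map_triangle (a b : G) : f a * f b * f (a * b)⁻¹ = 1 := by
    rw [← prod_ofFn_comp_triangle map_one n, hprod]
  have map_inv_mul_map (c : G) : f c⁻¹ * f c = 1 := by
    simpa only [map_one, mul_one, inv_inv] using map_triangle c⁻¹ 1
  exact (left_inv_eq_right_inv (map_triangle a b) (map_inv_mul_map (a * b))).symm

end Group

end Gon

theorem gonMap_induced_by_unique_group_hom_general {G M : Type*} [Group G] [Monoid M] (k : ℕ)
    (hk : 3 ≤ k) (Ψ : Gon k G → Gon k M)
    (hone : (Ψ ⟨fun _ => 1, by simp⟩).1 = fun _ => 1)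
    (hdep : ∀ (g h : Gon k G) (l m : Fin k), g.1 l = h.1 m → (Ψ g).1 l = (Ψ h).1 m) :
    ∃! f : G →* M, ∀ g : Gon k G, (Ψ g).1 = fun i => f (g.1 i) := by
  obtain ⟨n, rfl⟩ := Nat.exists_eq_add_of_le' hk
  obtain ⟨f, hf⟩ := Gon.exists_eq_comp_of_componentwise hdep
  have map_one : f 1 = 1 := congrFun ((hf ⟨fun _ => 1, by simp⟩).symm.trans hone) 0
  have hprod (g : Gon (n + 3) G) : (List.ofFn (f ∘ g.1)).prod = 1 := hf g ▸ (Ψ g).2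
  refine ⟨⟨⟨f, map_one⟩, Gon.map_mul_of_prod_ofFn_comp_eq_one map_one hprod⟩, hf, fun f' hf' => ?_⟩
  exact DFunLike.coe_injective <|
    Gon.comp_left_injective <| funext fun g => (hf' g).symm.trans (hf g)

/-- Let `G` be a group and `k ≥ 3`, and let `𝒢_k` be the set of `k`-tuples of
elements of `G` whose (ordered) product is `1`.  Any map `Ψ : 𝒢_k → 𝒢_k` fixing
the constant tuple `(1, …, 1)` and having the componentwise-dependence property
— whenever two tuples in `𝒢_k` have an equal component, their images have the
corresponding components equal — is induced componentwise by a unique group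
homomorphism `f : G → G`. -/
theorem gonMap_induced_by_unique_group_hom {G : Type*} [Group G] (k : ℕ)
    (hk : 3 ≤ k)
    (Ψ : {g : Fin k → G // (List.ofFn g).prod = 1} →
         {g : Fin k → G // (List.ofFn g).prod = 1})
    (hone : (Ψ ⟨fun _ => 1, by simp⟩).1 = fun _ => 1)
    (hdep : ∀ (g h : {g : Fin k → G // (List.ofFn g).prod = 1}) (l m : Fin k),
      g.1 l = h.1 m → (Ψ g).1 l = (Ψ h).1 m) :
    ∃! f : G →* G,
      ∀ g : {g : Fin k → G // (List.ofFn g).prod = 1},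
        (Ψ g).1 = fun i => f (g.1 i) :=
  gonMap_induced_by_unique_group_hom_general k hk Ψ hone hdep
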